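/- Fix l ∈ {1,...,8}. Then: (1) for every w ∈ W(E8) and every C_l-frame A the image w(A) = {w(a) : a ∈ A} is again a C_l-frame, and W(E8) acts transitively on the set 𝒞_l of all C_l-frames; (2) every C_l-frame is contained in a unique C_8-frame; (3) the number of C_l-frames is |𝒞_l| = 135·binomial(8,l). -/

import Mathlib

noncomputable section

/-- `V = ℂ^8`. -/
abbrev V8 : Type := Fin 8 → ℂ

/-- The symmetric bilinear form `⟨x,y⟩ = ∑ᵢ xᵢ yᵢ` on `V`. -/
def ip (x y : V8) : ℂ := ∑ i, x i * y i

/-- `φ = (1/2, …, 1/2)`. -/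
def phi8 : V8 := fun _ => (1 : ℂ) / 2

/-- `x` has all coordinates in `ℤ`. -/
def IsIntVec (x : V8) : Prop := ∀ i, ∃ n : ℤ, x i = (n : ℂ)

/-- The `E₈` root lattice `P = {a ∈ ℤ⁸ ∪ (φ + ℤ⁸) : ⟨φ,a⟩ ∈ ℤ}`. -/
def E8lat : Set V8 :=
  {a | (IsIntVec a ∨ IsIntVec (a - phi8)) ∧ ∃ n : ℤ, ip phi8 a = (n : ℂ)}

/-- A `C_l`-frame relative to `P`: a set `A = {±a₀, …, ±a_{l-1}}` with
`⟨aᵢ,aⱼ⟩ = δᵢⱼ`, `aᵢ ± aⱼ ∈ P` for `i < j`, and `2aᵢ ∈ P`. -/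
def IsClFrame (l : ℕ) (A : Set V8) : Prop :=
  ∃ a : Fin l → V8,
    A = Set.range a ∪ Set.range (fun i => -a i) ∧
    (∀ i j, ip (a i) (a j) = if i = j then 1 else 0) ∧
    (∀ i j, i < j → a i + a j ∈ E8lat ∧ a i - a j ∈ E8lat) ∧
    (∀ i, (2 : ℂ) • a i ∈ E8lat)

/-- `w` is the reflection `r_α(v) = v − ⟨α,v⟩α` for some root `α ∈ Δ(E₈)`. -/
def IsE8Reflection (w : V8 ≃ₗ[ℂ] V8) : Prop :=
  ∃ α, α ∈ E8lat ∧ ip α α = 2 ∧ ∀ v, w v = v - ip α v • α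

/-- The Weyl group `W(E₈)`, generated by the reflections in roots of `Δ(E₈)`. -/
def WE8 : Subgroup (V8 ≃ₗ[ℂ] V8) := Subgroup.closure {w | IsE8Reflection w}

/-!
A vector `a` can occur in a frame exactly when `⟨a,a⟩ = 1` and `2a ∈ P`; call it a frame vector.
Two frame vectors with `⟨a,b⟩ = 3/4` are exchanged by the reflection in the root `2(a - b)`, and
together with the roots `±eᵢ ± eⱼ` such reflections carry every frame vector to `e₀`. A frame
through `a` lies in `F(a) = {b a frame vector : a + b ∈ P}`, and `F(e₀) = {±e₀, …, ±e₇}` is a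
`C₈`-frame, so by transitivity every `F(a)` is the unique `C₈`-frame through `a`. Frames can
therefore be moved into `{±eᵢ}`, where `W(E₈)` contains all coordinate permutations. Finally, the
`C₈`-frames partition the `2160` frame vectors into blocks of `16`, whence there are `135` of them,
and each contains `binomial(8,l)` of the `C_l`-frames.
-/

open scoped Pointwise Matrix

/-! ### The lattice `P` -/

theorem ip_eq_dotProduct (x y : V8) : ip x y = x ⬝ᵥ y := rfl

/-- The inclusion `ℤ⁸ → V`. -/
def intVec : (Fin 8 → ℤ) →+ V8 := (Int.castAddHom ℂ).compLeft (Fin 8)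

theorem intVec_apply (z : Fin 8 → ℤ) (i : Fin 8) : intVec z i = z i := rfl

theorem intVec_injective : Function.Injective intVec :=
  fun _ _ h => funext fun i => Int.cast_injective (congrFun h i)

theorem isIntVec_iff {x : V8} : IsIntVec x ↔ ∃ z, intVec z = x :=
  ⟨fun h => (Classical.skolem.1 h).imp fun _ hz => funext fun i => (hz i).symm,
    fun ⟨z, hz⟩ i => ⟨z i, by rw [← hz, intVec_apply]⟩⟩

theorem ip_smul_intVec (c d : ℂ) (z w : Fin 8 → ℤ) :
    ip (c • intVec z) (d • intVec w) = c * d * (z ⬝ᵥ w : ℤ) := by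
  have cast_dot : intVec z ⬝ᵥ intVec w = (z ⬝ᵥ w : ℤ) :=
    ((Int.castRingHom ℂ).map_dotProduct z w).symm
  rw [ip_eq_dotProduct, smul_dotProduct, dotProduct_smul, cast_dot, smul_eq_mul, smul_eq_mul,
    mul_assoc]

theorem exists_int_cast_eq_div_four_iff {n : ℤ} : (∃ k : ℤ, (n : ℂ) / 4 = k) ↔ 4 ∣ n := by
  refine exists_congr fun k => ?_
  rw [div_eq_iff (by norm_num : (4 : ℂ) ≠ 0), mul_comm]
  norm_cast

/-- The lattice `2P ⊂ ℤ⁸`: doubling clears the denominators of `P`. -/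
def doubledLattice : AddSubgroup (Fin 8 → ℤ) where
  carrier := {z | (∃ p : ℤ, ∃ u : Fin 8 → ℤ, ∀ i, z i = p + 2 * u i) ∧ 4 ∣ ∑ i, z i}
  zero_mem' := ⟨⟨0, 0, by simp⟩, by simp⟩
  add_mem' := by
    rintro z w ⟨⟨p, u, hz⟩, hz4⟩ ⟨⟨q, v, hw⟩, hw4⟩
    refine ⟨⟨p + q, u + v, fun i => ?_⟩, ?_⟩
    · simp only [Pi.add_apply, hz, hw]; ring
    · simpa only [Pi.add_apply, Finset.sum_add_distrib] using dvd_add hz4 hw4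
  neg_mem' := by
    rintro z ⟨⟨p, u, hz⟩, hz4⟩
    refine ⟨⟨-p, -u, fun i => ?_⟩, ?_⟩
    · simp only [Pi.neg_apply, hz]; ring
    · simpa only [Pi.neg_apply, Finset.sum_neg_distrib, dvd_neg] using hz4

theorem mem_doubledLattice_iff {z : Fin 8 → ℤ} :
    z ∈ doubledLattice ↔ ((∀ i, Even (z i)) ∨ ∀ i, Odd (z i)) ∧ 4 ∣ ∑ i, z i := by
  refine and_congr_left fun _ => ⟨?_, ?_⟩
  · rintro ⟨p, u, hz⟩
    rcases Int.even_or_odd p with hp | hp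
    · exact Or.inl fun i => hz i ▸ hp.add (even_two_mul _)
    · exact Or.inr fun i => hz i ▸ hp.add_even (even_two_mul _)
  · rintro (h | h)
    · exact ⟨0, fun i => z i / 2, fun i => by obtain ⟨k, hk⟩ := h i; lia⟩
    · exact ⟨1, fun i => z i / 2, fun i => by obtain ⟨k, hk⟩ := h i; lia⟩

theorem four_dvd_dotProduct {z w : Fin 8 → ℤ} (hz : z ∈ doubledLattice)
    (hw : w ∈ doubledLattice) : 4 ∣ z ⬝ᵥ w := by
  obtain ⟨⟨p, u, hz⟩, hz4⟩ := hz
  obtain ⟨⟨q, v, hw⟩, hw4⟩ := hw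
  have hv : 4 ∣ 2 * ∑ i, v i := by
    have : ∑ i, w i = 8 * q + 2 * ∑ i, v i := by simp [hw, Finset.sum_add_distrib, Finset.mul_sum]
    lia
  have expand : z ⬝ᵥ w = q * ∑ i, z i + p * (2 * ∑ i, v i) + 4 * (u ⬝ᵥ v) := by
    simp only [dotProduct, Finset.mul_sum, ← Finset.sum_add_distrib]
    exact Finset.sum_congr rfl fun i _ => by rw [hw, hz]; ring
  rw [expand]
  exact dvd_add (dvd_add (hz4.mul_left q) (hv.mul_left p)) (dvd_mul_right 4 _)

theorem mem_E8lat_iff {x : V8} :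
    x ∈ E8lat ↔ ∃ z ∈ doubledLattice, (1 / 2 : ℂ) • intVec z = x := by
  have phi_dot (z : Fin 8 → ℤ) :
      ip phi8 ((1 / 2 : ℂ) • intVec z) = ((∑ i, z i : ℤ) : ℂ) / 4 := by
    simp only [ip, phi8, Pi.smul_apply, intVec_apply, smul_eq_mul, Int.cast_sum, Finset.sum_div]
    exact Finset.sum_congr rfl fun i _ => by ring
  constructor
  · rintro ⟨hint | hint, hsum⟩ <;> obtain ⟨u, hu⟩ := isIntVec_iff.1 hint
    · have hx : (1 / 2 : ℂ) • intVec (fun i => 0 + 2 * u i) = x := by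
        rw [← hu]; ext i; simp [intVec_apply]
      rw [← hx, phi_dot, exists_int_cast_eq_div_four_iff] at hsum
      exact ⟨_, ⟨⟨0, u, fun _ => rfl⟩, hsum⟩, hx⟩
    · have hx : (1 / 2 : ℂ) • intVec (fun i => 1 + 2 * u i) = x := by
        rw [← sub_add_cancel x phi8, ← hu]; ext i; simp [intVec_apply, phi8]; ring
      rw [← hx, phi_dot, exists_int_cast_eq_div_four_iff] at hsum
      exact ⟨_, ⟨⟨1, u, fun _ => rfl⟩, hsum⟩, hx⟩
  · rintro ⟨z, ⟨⟨p, u, hz⟩, hz4⟩, rfl⟩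
    refine ⟨?_, by rwa [phi_dot, exists_int_cast_eq_div_four_iff]⟩
    rcases Int.even_or_odd' p with ⟨q, rfl | rfl⟩
    · exact Or.inl fun i => ⟨q + u i, by simp [intVec_apply, hz]; ring⟩
    · exact Or.inr fun i => ⟨q + u i, by simp [intVec_apply, hz, phi8]; ring⟩

/-- The lattice `P` as an additive subgroup of `V`. -/
def E8Lattice : AddSubgroup V8 where
  carrier := E8lat
  zero_mem' := mem_E8lat_iff.2 ⟨0, zero_mem _, by simp⟩
  add_mem' hx hy := by
    obtain ⟨z, hz, rfl⟩ := mem_E8lat_iff.1 hx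
    obtain ⟨w, hw, rfl⟩ := mem_E8lat_iff.1 hy
    exact mem_E8lat_iff.2 ⟨z + w, add_mem hz hw, by rw [map_add, smul_add]⟩
  neg_mem' hx := by
    obtain ⟨z, hz, rfl⟩ := mem_E8lat_iff.1 hx
    exact mem_E8lat_iff.2 ⟨-z, neg_mem hz, by rw [map_neg, smul_neg]⟩

theorem exists_int_eq_ip {x y : V8} (hx : x ∈ E8lat) (hy : y ∈ E8lat) :
    ∃ n : ℤ, ip x y = n := by
  obtain ⟨z, hz, rfl⟩ := mem_E8lat_iff.1 hx
  obtain ⟨w, hw, rfl⟩ := mem_E8lat_iff.1 hy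
  obtain ⟨k, hk⟩ := four_dvd_dotProduct hz hw
  refine ⟨k, ?_⟩
  rw [ip_smul_intVec, hk]
  push_cast; ring

/-! ### The Weyl group -/

/-- The reflection `r_α` of `V` in a vector with `⟨α,α⟩ = 2`. -/
def rootReflection {α : V8} (h : ip α α = 2) : V8 ≃ₗ[ℂ] V8 :=
  Module.reflection (f := dotProductBilin ℂ ℂ α) h

theorem rootReflection_apply {α : V8} (h : ip α α = 2) (v : V8) :
    rootReflection h v = v - ip α v • α :=
  Module.reflection_apply v h

theorem rootReflection_mem_WE8 {α : V8} (hα : α ∈ E8lat) (h : ip α α = 2) :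
    rootReflection h ∈ WE8 :=
  Subgroup.subset_closure ⟨α, hα, h, rootReflection_apply h⟩

theorem ip_map_map {w : V8 ≃ₗ[ℂ] V8} (hw : w ∈ WE8) (x y : V8) : ip (w x) (w y) = ip x y := by
  induction hw using Subgroup.closure_induction generalizing x y with
  | mem r hr =>
    obtain ⟨α, -, hα, hr⟩ := hr
    simp only [hr, ip_eq_dotProduct, sub_dotProduct, dotProduct_sub, smul_dotProduct,
      dotProduct_smul, smul_eq_mul, dotProduct_comm x α] at hα ⊢
    linear_combination (α ⬝ᵥ x) * (α ⬝ᵥ y) * hα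
  | one => rfl
  | mul a b _ _ iha ihb => exact (iha _ _).trans (ihb _ _)
  | inv a _ iha => rw [← iha]; congr 1 <;> exact a.apply_symm_apply _

theorem map_mem_E8lat_iff {w : V8 ≃ₗ[ℂ] V8} (hw : w ∈ WE8) {x : V8} :
    w x ∈ E8lat ↔ x ∈ E8lat := by
  induction hw using Subgroup.closure_induction generalizing x with
  | mem r hr =>
    obtain ⟨α, hαP, hα, hr⟩ := hr
    have map_mem {x : V8} (hx : x ∈ E8lat) : r x ∈ E8lat := by
      obtain ⟨n, hn⟩ := exists_int_eq_ip hαP hx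
      rw [hr, hn, Int.cast_smul_eq_zsmul]
      exact E8Lattice.sub_mem hx (E8Lattice.zsmul_mem hαP n)
    have involutive : r (r x) = x := by
      obtain rfl : r = rootReflection hα := LinearEquiv.ext fun v => by
        rw [hr, rootReflection_apply]
      exact Module.involutive_reflection _ x
    exact ⟨fun h => involutive ▸ map_mem h, map_mem⟩
  | one => exact Iff.rfl
  | mul a b _ _ iha ihb => exact iha.trans ihb
  | inv a _ iha => rw [← iha]; exact iff_of_eq (congrArg (· ∈ E8lat) (a.apply_symm_apply x))

theorem orbit_eq_of_smul_sub_mem {a b : V8} {c : ℂ} (hmem : c • (a - b) ∈ E8lat)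
    (hroot : ip (c • (a - b)) (c • (a - b)) = 2) (hnorm : ip a a = ip b b) :
    MulAction.orbit WE8 a = MulAction.orbit WE8 b := by
  have reflect : rootReflection hroot a = b := by
    have coeff : ip (c • (a - b)) a * c = 1 := by
      simp only [ip_eq_dotProduct, smul_dotProduct, dotProduct_smul, sub_dotProduct,
        dotProduct_sub, smul_eq_mul, dotProduct_comm b a] at hroot hnorm ⊢
      linear_combination hroot / 2 + c ^ 2 * hnorm / 2
    rw [rootReflection_apply, smul_smul, coeff, one_smul, sub_sub_cancel]
  have ha : (⟨_, rootReflection_mem_WE8 hmem hroot⟩ : WE8) • a = b := reflect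
  rw [← ha, MulAction.orbit_smul]

/-! ### Frames -/

section SignedImage

variable {ι : Type*}

/-- The set `{±a_j : j ∈ J}`. -/
def signedImage (a : ι → V8) (J : Finset ι) : Set V8 := {v | ∃ j ∈ J, a j = v ∨ -a j = v}

theorem mem_signedImage_of_mem (a : ι → V8) {J : Finset ι} {j : ι} (hj : j ∈ J) :
    a j ∈ signedImage a J :=
  ⟨j, hj, Or.inl rfl⟩

theorem signedImage_mono (a : ι → V8) {J K : Finset ι} (h : J ⊆ K) :
    signedImage a J ⊆ signedImage a K :=
  fun _ ⟨j, hj, hv⟩ => ⟨j, h hj, hv⟩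

theorem neg_mem_signedImage {a : ι → V8} {J : Finset ι} {v : V8} (hv : v ∈ signedImage a J) :
    -v ∈ signedImage a J := by
  obtain ⟨j, hj, rfl | rfl⟩ := hv
  · exact ⟨j, hj, Or.inr rfl⟩
  · exact ⟨j, hj, Or.inl (neg_neg _).symm⟩

theorem signedImage_eq_union (a : ι → V8) (J : Finset ι) :
    signedImage a J = a '' J ∪ (fun j => -a j) '' J := by
  ext v
  simp only [signedImage, Set.mem_ofPred_eq, Set.mem_union, Set.mem_image, Finset.mem_coe,
    and_or_left, exists_or]

theorem signedImage_comp {κ : Type*} (a : ι → V8) (f : κ ↪ ι) (J : Finset κ) :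
    signedImage (a ∘ f) J = signedImage a (J.map f) := by
  ext v
  simp [signedImage]

theorem smul_signedImage (w : V8 ≃ₗ[ℂ] V8) (a : ι → V8) (J : Finset ι) :
    w • signedImage a J = signedImage (fun j => w (a j)) J := by
  change w '' _ = _
  simp only [signedImage_eq_union, Set.image_union, Set.image_image, map_neg]

/-- A family `a` such that `{±a_i}` is a frame. Taking `i = j` in `add_mem` gives `2a_i ∈ P`, and
then `a_i - a_j ∈ P` follows. -/
structure IsFrameFamily (a : ι → V8) : Prop where
  ip_self : ∀ i, ip (a i) (a i) = 1
  ip_eq_zero : Pairwise fun i j => ip (a i) (a j) = 0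
  add_mem : ∀ i j, a i + a j ∈ E8lat

namespace IsFrameFamily

variable {a : ι → V8}

theorem comp (ha : IsFrameFamily a) {κ : Type*} (f : κ ↪ ι) : IsFrameFamily (a ∘ f) where
  ip_self i := ha.ip_self (f i)
  ip_eq_zero _ _ hij := ha.ip_eq_zero (f.injective.ne hij)
  add_mem i j := ha.add_mem (f i) (f j)

theorem map (ha : IsFrameFamily a) {w : V8 ≃ₗ[ℂ] V8} (hw : w ∈ WE8) :
    IsFrameFamily fun i => w (a i) where
  ip_self i := (ip_map_map hw _ _).trans (ha.ip_self i)
  ip_eq_zero _ _ hij := (ip_map_map hw _ _).trans (ha.ip_eq_zero hij)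
  add_mem i j := by rw [← map_add, map_mem_E8lat_iff hw]; exact ha.add_mem i j

theorem sub_mem (ha : IsFrameFamily a) (i j : ι) : a i - a j ∈ E8lat := by
  rw [show a i - a j = a i + a j - (a j + a j) by abel]
  exact E8Lattice.sub_mem (ha.add_mem i j) (ha.add_mem j j)

theorem injective (ha : IsFrameFamily a) : Function.Injective a := by
  intro i j hij
  by_contra hne
  simpa [hij, ha.ip_self] using ha.ip_eq_zero hne

theorem ne_neg (ha : IsFrameFamily a) (i j : ι) : a i ≠ -a j := by
  intro h
  have hpair : ip (a i) (a j) = -1 := by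
    rw [h, ip_eq_dotProduct, neg_dotProduct, ← ip_eq_dotProduct, ha.ip_self]
  rcases eq_or_ne i j with rfl | hij
  · rw [ha.ip_self] at hpair; norm_num at hpair
  · rw [ha.ip_eq_zero hij] at hpair; norm_num at hpair

theorem apply_mem_signedImage_iff (ha : IsFrameFamily a) {J : Finset ι} {j : ι} :
    a j ∈ signedImage a J ↔ j ∈ J := by
  refine ⟨?_, mem_signedImage_of_mem a⟩
  rintro ⟨k, hk, h | h⟩
  · rwa [← ha.injective h]
  · exact absurd h.symm (ha.ne_neg j k)

theorem signedImage_injective (ha : IsFrameFamily a) : Function.Injective (signedImage a) :=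
  fun J K h => Finset.ext fun j => by
    rw [← ha.apply_mem_signedImage_iff, h, ha.apply_mem_signedImage_iff]

theorem ncard_signedImage (ha : IsFrameFamily a) (J : Finset ι) :
    (signedImage a J).ncard = 2 * J.card := by
  have disj : Disjoint (a '' J) ((fun j => -a j) '' J) := by
    rw [Set.disjoint_left]
    rintro _ ⟨i, -, rfl⟩ ⟨j, -, h⟩
    exact ha.ne_neg i j h.symm
  rw [signedImage_eq_union, Set.ncard_union_eq disj,
    Set.ncard_image_of_injective _ ha.injective,
    Set.ncard_image_of_injective _
      (show Function.Injective fun j => -a j from neg_injective.comp ha.injective),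
    Set.ncard_coe_finset, two_mul]

end IsFrameFamily

end SignedImage

theorem isClFrame_iff {l : ℕ} {A : Set V8} :
    IsClFrame l A ↔ ∃ a : Fin l → V8, IsFrameFamily a ∧ signedImage a Finset.univ = A := by
  simp only [signedImage_eq_union, Finset.coe_univ, Set.image_univ]
  constructor
  · rintro ⟨a, rfl, hip, hmem, htwo⟩
    refine ⟨a, ⟨fun i => by simp [hip], fun i j hij => by simp [hip, hij], fun i j => ?_⟩, rfl⟩
    rcases lt_trichotomy i j with hij | rfl | hij
    · exact (hmem i j hij).1
    · rw [← two_smul ℂ]; exact htwo i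
    · rw [add_comm]; exact (hmem j i hij).1
  · rintro ⟨a, ha, rfl⟩
    refine ⟨a, rfl, fun i j => ?_, fun i j _ => ⟨ha.add_mem i j, ha.sub_mem i j⟩, fun i => ?_⟩
    · split_ifs with hij
      · rw [hij, ha.ip_self]
      · exact ha.ip_eq_zero hij
    · rw [two_smul]; exact ha.add_mem i i

theorem IsFrameFamily.isClFrame_signedImage {ι : Type*} {a : ι → V8} (ha : IsFrameFamily a)
    (J : Finset ι) : IsClFrame J.card (signedImage a J) := by
  let f : Fin J.card ↪ ι := J.equivFin.symm.toEmbedding.trans (Function.Embedding.subtype _)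
  have hf : Finset.univ.map f = J := by
    rw [← Finset.map_map, Finset.map_univ_equiv]
    exact J.attach_map_val
  exact isClFrame_iff.2 ⟨a ∘ f, ha.comp f, by rw [signedImage_comp, hf]⟩

/-- The vectors that can occur in a frame. -/
def frameVectors : Set V8 := {a | ip a a = 1 ∧ (2 : ℂ) • a ∈ E8lat}

theorem map_mem_frameVectors_iff {w : V8 ≃ₗ[ℂ] V8} (hw : w ∈ WE8) {a : V8} :
    w a ∈ frameVectors ↔ a ∈ frameVectors :=
  and_congr (by rw [ip_map_map hw]) (by rw [← map_smul, map_mem_E8lat_iff hw])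

theorem neg_mem_frameVectors {a : V8} (ha : a ∈ frameVectors) : -a ∈ frameVectors :=
  ⟨by simpa [ip_eq_dotProduct] using ha.1, by rw [smul_neg]; exact E8Lattice.neg_mem ha.2⟩

namespace IsClFrame

variable {l : ℕ} {A : Set V8}

theorem smul (hA : IsClFrame l A) {w : V8 ≃ₗ[ℂ] V8} (hw : w ∈ WE8) : IsClFrame l (w • A) := by
  obtain ⟨a, ha, rfl⟩ := isClFrame_iff.1 hA
  exact isClFrame_iff.2 ⟨_, ha.map hw, (smul_signedImage w a _).symm⟩

theorem nonempty (hA : IsClFrame l A) (hl : 1 ≤ l) : A.Nonempty := by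
  obtain ⟨a, -, rfl⟩ := isClFrame_iff.1 hA
  exact ⟨a ⟨0, hl⟩, mem_signedImage_of_mem a (Finset.mem_univ _)⟩

theorem ncard_eq (hA : IsClFrame l A) : A.ncard = 2 * l := by
  obtain ⟨a, ha, rfl⟩ := isClFrame_iff.1 hA
  rw [ha.ncard_signedImage, Finset.card_fin]

theorem neg_mem (hA : IsClFrame l A) {v : V8} (hv : v ∈ A) : -v ∈ A := by
  obtain ⟨a, -, rfl⟩ := isClFrame_iff.1 hA
  exact neg_mem_signedImage hv

theorem subset_frameVectors (hA : IsClFrame l A) : A ⊆ frameVectors := by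
  obtain ⟨a, ha, rfl⟩ := isClFrame_iff.1 hA
  have mem (i : Fin l) : a i ∈ frameVectors :=
    ⟨ha.ip_self i, by rw [two_smul]; exact ha.add_mem i i⟩
  rintro _ ⟨i, -, rfl | rfl⟩
  · exact mem i
  · exact neg_mem_frameVectors (mem i)

theorem add_mem_E8lat (hA : IsClFrame l A) {v w : V8} (hv : v ∈ A) (hw : w ∈ A) :
    v + w ∈ E8lat := by
  obtain ⟨a, ha, rfl⟩ := isClFrame_iff.1 hA
  obtain ⟨i, -, rfl | rfl⟩ := hv <;> obtain ⟨j, -, rfl | rfl⟩ := hw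
  · exact ha.add_mem i j
  · rw [← sub_eq_add_neg]; exact ha.sub_mem i j
  · rw [neg_add_eq_sub]; exact ha.sub_mem j i
  · rw [← neg_add]; exact E8Lattice.neg_mem (ha.add_mem i j)

theorem exists_eq_signedImage_of_subset (hA : IsClFrame l A) {ι : Type*} [Fintype ι]
    {b : ι → V8} (hb : IsFrameFamily b) (hsub : A ⊆ signedImage b Finset.univ) :
    ∃ J : Finset ι, J.card = l ∧ signedImage b J = A := by
  classical
  let J : Finset ι := {j | b j ∈ A}
  have hJ : signedImage b J = A := by
    ext v
    constructor
    · rintro ⟨j, hj, rfl | rfl⟩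
      · exact (Finset.mem_filter.1 hj).2
      · exact hA.neg_mem (Finset.mem_filter.1 hj).2
    · intro hv
      obtain ⟨j, -, rfl | rfl⟩ := hsub hv
      · exact ⟨j, by simpa [J] using hv, Or.inl rfl⟩
      · exact ⟨j, by simpa [J] using hA.neg_mem hv, Or.inr rfl⟩
  refine ⟨J, ?_, hJ⟩
  have hcard := hA.ncard_eq
  rw [← hJ, hb.ncard_signedImage] at hcard
  lia

end IsClFrame

theorem ncard_isClFrame_subset {m l : ℕ} {B : Set V8} (hB : IsClFrame m B) :
    {A | IsClFrame l A ∧ A ⊆ B}.ncard = m.choose l := by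
  obtain ⟨b, hb, rfl⟩ := isClFrame_iff.1 hB
  have himage : {A | IsClFrame l A ∧ A ⊆ signedImage b Finset.univ} =
      signedImage b '' (Finset.univ.powersetCard l : Finset (Finset (Fin m))) := by
    ext A
    simp only [Set.mem_ofPred_eq, Set.mem_image, Finset.mem_coe, Finset.mem_powersetCard_univ]
    constructor
    · rintro ⟨hA, hsub⟩
      exact hA.exists_eq_signedImage_of_subset hb hsub
    · rintro ⟨J, rfl, rfl⟩
      exact ⟨hb.isClFrame_signedImage J, signedImage_mono b (Finset.subset_univ J)⟩
  rw [himage, Set.ncard_image_of_injective _ hb.signedImage_injective, Set.ncard_coe_finset,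
    Finset.card_powersetCard, Finset.card_fin]

/-! ### Coordinates of frame vectors -/

/-- The integer vectors `y` for which `y / 4` is a frame vector. -/
def frameCoords : Set (Fin 8 → ℤ) := {y | y ∈ doubledLattice ∧ y ⬝ᵥ y = 16}

theorem mem_frameVectors_iff {a : V8} :
    a ∈ frameVectors ↔ ∃ y ∈ frameCoords, (1 / 4 : ℂ) • intVec y = a := by
  have two_smul_quarter (y : Fin 8 → ℤ) :
      (2 : ℂ) • (1 / 4 : ℂ) • intVec y = (1 / 2 : ℂ) • intVec y := by
    rw [smul_smul]; norm_num
  have norm_iff (y : Fin 8 → ℤ) :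
      ip ((1 / 4 : ℂ) • intVec y) ((1 / 4 : ℂ) • intVec y) = 1 ↔ y ⬝ᵥ y = 16 := by
    rw [ip_smul_intVec, ← Int.cast_inj (α := ℂ)]
    constructor <;> intro h
    · push_cast; linear_combination 16 * h
    · rw [h]; norm_num
  constructor
  · rintro ⟨hnorm, hmem⟩
    obtain ⟨y, hy, h⟩ := mem_E8lat_iff.1 hmem
    obtain rfl : (1 / 4 : ℂ) • intVec y = a :=
      smul_right_injective V8 (two_ne_zero' ℂ) ((two_smul_quarter y).trans h)
    exact ⟨y, ⟨hy, (norm_iff y).1 hnorm⟩, rfl⟩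
  · rintro ⟨y, ⟨hy, hnorm⟩, rfl⟩
    exact ⟨(norm_iff y).2 hnorm, mem_E8lat_iff.2 ⟨y, hy, (two_smul_quarter y).symm⟩⟩

theorem natAbs_le_four {y : Fin 8 → ℤ} (hy : y ⬝ᵥ y = 16) (i : Fin 8) :
    (y i).natAbs ≤ 4 := by
  have hle : y i * y i ≤ y ⬝ᵥ y :=
    Finset.single_le_sum (f := fun j => y j * y j) (fun j _ => mul_self_nonneg _)
      (Finset.mem_univ i)
  rw [hy, ← Int.natAbs_mul_self'] at hle
  norm_cast at hle
  nlinarith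

theorem exists_two_le_natAbs {y : Fin 8 → ℤ} (hy : y ⬝ᵥ y = 16) :
    ∃ i, 2 ≤ (y i).natAbs := by
  have hsum : ∑ _i : Fin 8, (2 : ℤ) ≤ ∑ i, y i * y i := hy.ge
  obtain ⟨i, -, hi⟩ := Finset.exists_le_of_sum_le Finset.univ_nonempty hsum
  exact ⟨i, by rw [← Int.natAbs_mul_self'] at hi; norm_cast at hi; nlinarith [(y i).natAbs.zero_le]⟩

theorem exists_natAbs_le_one {y : Fin 8 → ℤ} (hy : y ⬝ᵥ y = 16) :
    ∃ i, (y i).natAbs ≤ 1 := by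
  have hsum : ∑ i, y i * y i ≤ ∑ _i : Fin 8, (2 : ℤ) := hy.le
  obtain ⟨i, -, hi⟩ := Finset.exists_le_of_sum_le Finset.univ_nonempty hsum
  exact ⟨i, by rw [← Int.natAbs_mul_self'] at hi; norm_cast at hi; nlinarith⟩

theorem eq_of_ip_eq_one {a b : V8} (ha : a ∈ frameVectors) (hb : b ∈ frameVectors)
    (h : ip a b = 1) : a = b := by
  obtain ⟨y, ⟨-, hy⟩, rfl⟩ := mem_frameVectors_iff.1 ha
  obtain ⟨z, ⟨-, hz⟩, rfl⟩ := mem_frameVectors_iff.1 hb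
  have hyz : y ⬝ᵥ z = 16 := by
    rw [ip_smul_intVec] at h
    exact_mod_cast (by linear_combination 16 * h : ((y ⬝ᵥ z : ℤ) : ℂ) = 16)
  have hdist : (y - z) ⬝ᵥ (y - z) = 0 := by
    rw [sub_dotProduct, dotProduct_sub, dotProduct_sub, dotProduct_comm z y]; lia
  rw [sub_eq_zero.1 (dotProduct_self_eq_zero.1 hdist)]

/-! ### The standard frame -/

/-- The standard basis vector `e_i` of `V`. -/
abbrev stdVec (i : Fin 8) : V8 := Pi.single i 1

theorem ip_stdVec (a : V8) (i : Fin 8) : ip a (stdVec i) = a i := dotProduct_single_one a i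

theorem isFrameFamily_stdVec : IsFrameFamily stdVec where
  ip_self i := (ip_stdVec _ i).trans (Pi.single_eq_same i 1)
  ip_eq_zero i j hij := (ip_stdVec _ j).trans (Pi.single_eq_of_ne hij.symm 1)
  add_mem i j := by
    refine mem_E8lat_iff.2 ⟨2 • (Pi.single i 1 + Pi.single j 1), ?_, ?_⟩
    · refine mem_doubledLattice_iff.2 ⟨Or.inl fun k => ⟨_, two_nsmul _⟩, ?_⟩
      simp [← Finset.mul_sum, Finset.sum_add_distrib]
    · ext k
      simp [intVec_apply, Pi.single_apply, mul_add]

theorem isClFrame_stdVec : IsClFrame 8 (signedImage stdVec Finset.univ) :=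
  isFrameFamily_stdVec.isClFrame_signedImage Finset.univ

theorem stdVec_mem_frameVectors (i : Fin 8) : stdVec i ∈ frameVectors :=
  isClFrame_stdVec.subset_frameVectors (mem_signedImage_of_mem _ (Finset.mem_univ i))

theorem mem_signedImage_stdVec {y : Fin 8 → ℤ} (hy : y ∈ frameCoords) {i : Fin 8}
    (hi : (y i).natAbs = 4) : (1 / 4 : ℂ) • intVec y ∈ signedImage stdVec Finset.univ := by
  have ha := mem_frameVectors_iff.2 ⟨y, hy, rfl⟩
  have hip : ip ((1 / 4 : ℂ) • intVec y) (stdVec i) = y i / 4 := by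
    rw [ip_stdVec, Pi.smul_apply, intVec_apply, smul_eq_mul]; ring
  rcases Int.natAbs_eq_iff.1 hi with h | h <;> rw [h] at hip
  · refine ⟨i, Finset.mem_univ i, Or.inl (eq_of_ip_eq_one ha (stdVec_mem_frameVectors i) ?_).symm⟩
    rw [hip]; norm_num
  · refine ⟨i, Finset.mem_univ i, Or.inr (eq_of_ip_eq_one ha
      (neg_mem_frameVectors (stdVec_mem_frameVectors i)) ?_).symm⟩
    rw [ip_eq_dotProduct, dotProduct_neg, ← ip_eq_dotProduct, hip]; norm_num

/-- The `C₈`-frame through a frame vector `a`; see `isClFrame_frameOf`. -/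
def frameOf (a : V8) : Set V8 := {b | b ∈ frameVectors ∧ a + b ∈ E8lat}

theorem IsClFrame.subset_frameOf {l : ℕ} {A : Set V8} (hA : IsClFrame l A) {v : V8} (hv : v ∈ A) :
    A ⊆ frameOf v :=
  fun _ hw => ⟨hA.subset_frameVectors hw, hA.add_mem_E8lat hv hw⟩

theorem smul_frameOf {w : V8 ≃ₗ[ℂ] V8} (hw : w ∈ WE8) (a : V8) :
    w • frameOf a = frameOf (w a) := by
  change w '' _ = _
  ext b
  obtain ⟨b, rfl⟩ := w.surjective b
  rw [w.injective.mem_set_image]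
  exact and_congr (map_mem_frameVectors_iff hw).symm
    (by rw [← map_add, map_mem_E8lat_iff hw])

theorem frameOf_stdVec (i : Fin 8) :
    frameOf (stdVec i) = signedImage stdVec Finset.univ := by
  refine subset_antisymm ?_
    (isClFrame_stdVec.subset_frameOf (mem_signedImage_of_mem _ (Finset.mem_univ i)))
  rintro b ⟨hb, hadd⟩
  obtain ⟨y, hy, rfl⟩ := mem_frameVectors_iff.1 hb
  obtain ⟨z, hz, h⟩ := mem_E8lat_iff.1 hadd
  have hcoord (j : Fin 8) : y j = 2 * z j - 4 * if j = i then 1 else 0 := by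
    have hj := congrFun h j
    simp only [Pi.smul_apply, Pi.add_apply, intVec_apply, smul_eq_mul, Pi.single_apply] at hj
    rw [← Int.cast_inj (α := ℂ)]
    push_cast
    linear_combination -4 * hj
  rcases (mem_doubledLattice_iff.1 hz).1 with heven | hodd
  · obtain ⟨j, hj⟩ := exists_two_le_natAbs hy.2
    obtain ⟨k, hk⟩ := heven j
    have hle := natAbs_le_four hy.2 j
    have hyj := hcoord j
    exact mem_signedImage_stdVec hy (i := j) (by lia)
  · obtain ⟨j, hj⟩ := exists_natAbs_le_one hy.2
    obtain ⟨k, hk⟩ := hodd j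
    have hyj := hcoord j
    lia

/-! ### Transitivity -/

theorem orbit_eq_of_ip_eq_zero {a b : V8} (ha : ip a a = 1) (hb : ip b b = 1)
    (hmem : a - b ∈ E8lat) (hip : ip a b = 0) :
    MulAction.orbit WE8 a = MulAction.orbit WE8 b := by
  refine orbit_eq_of_smul_sub_mem (c := 1) (by rwa [one_smul]) ?_ (ha.trans hb.symm)
  simp only [ip_eq_dotProduct, one_smul, sub_dotProduct, dotProduct_sub,
    dotProduct_comm b a] at ha hb hip ⊢
  linear_combination ha + hb - 2 * hip

theorem orbit_eq_of_ip_eq_three_quarters {a b : V8} (ha : a ∈ frameVectors)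
    (hb : b ∈ frameVectors) (hip : ip a b = 3 / 4) :
    MulAction.orbit WE8 a = MulAction.orbit WE8 b := by
  refine orbit_eq_of_smul_sub_mem (c := 2) ?_ ?_ (ha.1.trans hb.1.symm)
  · rw [smul_sub]
    exact E8Lattice.sub_mem ha.2 hb.2
  · have ha := ha.1
    have hb := hb.1
    simp only [ip_eq_dotProduct, smul_dotProduct, dotProduct_smul, sub_dotProduct, dotProduct_sub,
      dotProduct_comm b a, smul_eq_mul] at ha hb hip ⊢
    linear_combination 4 * ha + 4 * hb - 8 * hip

theorem IsFrameFamily.orbit_eq_of_mem_signedImage {ι : Type*} [Nontrivial ι] {a : ι → V8}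
    (ha : IsFrameFamily a) {J : Finset ι} {v : V8} (hv : v ∈ signedImage a J) (k : ι) :
    MulAction.orbit WE8 v = MulAction.orbit WE8 (a k) := by
  have orbit_eq (i j : ι) : MulAction.orbit WE8 (a i) = MulAction.orbit WE8 (a j) := by
    rcases eq_or_ne i j with rfl | hij
    · rfl
    · exact orbit_eq_of_ip_eq_zero (ha.ip_self i) (ha.ip_self j) (ha.sub_mem i j)
        (ha.ip_eq_zero hij)
  obtain ⟨i, -, rfl | rfl⟩ := hv
  · exact orbit_eq i k
  · obtain ⟨j, hji⟩ := exists_ne i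
    have orbit_neg : MulAction.orbit WE8 (-a i) = MulAction.orbit WE8 (a j) := by
      refine orbit_eq_of_ip_eq_zero ?_ (ha.ip_self j) ?_ ?_
      · rw [ip_eq_dotProduct, neg_dotProduct_neg]
        exact ha.ip_self i
      · rw [← neg_add']
        exact E8Lattice.neg_mem (ha.add_mem i j)
      · rw [ip_eq_dotProduct, neg_dotProduct, neg_eq_zero]
        exact ha.ip_eq_zero hji.symm
    exact orbit_neg.trans (orbit_eq j k)

theorem orbit_eq_of_odd {y : Fin 8 → ℤ} (hy : y ∈ frameCoords) (hodd : ∀ i, Odd (y i)) :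
    MulAction.orbit WE8 ((1 / 4 : ℂ) • intVec y) = MulAction.orbit WE8 (stdVec 0) := by
  have ha := mem_frameVectors_iff.2 ⟨y, hy, rfl⟩
  obtain ⟨i, hi⟩ := exists_two_le_natAbs hy.2
  have hip : ip ((1 / 4 : ℂ) • intVec y) (stdVec i) = y i / 4 := by
    rw [ip_stdVec, Pi.smul_apply, intVec_apply, smul_eq_mul]; ring
  have hyi : y i = 3 ∨ y i = -3 := by
    obtain ⟨k, hk⟩ := hodd i
    have := natAbs_le_four hy.2 i
    lia
  have hstd : stdVec i ∈ signedImage stdVec Finset.univ :=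
    mem_signedImage_of_mem _ (Finset.mem_univ i)
  obtain ⟨b, hb, hab⟩ : ∃ b ∈ signedImage stdVec Finset.univ,
      ip ((1 / 4 : ℂ) • intVec y) b = 3 / 4 := by
    rcases hyi with h | h <;> rw [h] at hip
    · exact ⟨_, hstd, by rw [hip]; norm_num⟩
    · refine ⟨_, neg_mem_signedImage hstd, ?_⟩
      rw [ip_eq_dotProduct, dotProduct_neg, ← ip_eq_dotProduct, hip]; norm_num
  exact (orbit_eq_of_ip_eq_three_quarters ha (isClFrame_stdVec.subset_frameVectors hb) hab).trans
    (isFrameFamily_stdVec.orbit_eq_of_mem_signedImage hb 0)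

theorem exists_odd_mem_frameCoords {x : Fin 8 → ℤ} (hx : ∀ j, (x j).natAbs ≤ 1)
    (hnorm : x ⬝ᵥ x = 4) {i k : Fin 8} (hi : x i ≠ 0) (hk : x k = 0) :
    ∃ g ∈ frameCoords, (∀ j, Odd (g j)) ∧ x ⬝ᵥ g = 6 := by
  -- Changing the sign `s` at the zero `k` of `x` alters `∑ g` by `2` and neither `g ⬝ᵥ g` nor
  -- `x ⬝ᵥ g`, so a suitable sign makes `∑ g` divisible by `4`.
  let g (s : ℤ) (j : Fin 8) : ℤ := if j = i then 3 * x j else if j = k then s else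
    if x j = 0 then 1 else x j
  have hcases (j : Fin 8) : x j = -1 ∨ x j = 0 ∨ x j = 1 := by have := hx j; lia
  have hnormg {s : ℤ} (hs : s * s = 1) : g s ⬝ᵥ g s = 16 := by
    have h (j : Fin 8) : g s j * g s j = 1 + 8 * if j = i then 1 else 0 := by
      rcases hcases j with h | h | h <;> grind
    simp [dotProduct, h, Finset.sum_add_distrib]
  have hdot (s : ℤ) : x ⬝ᵥ g s = 6 := by
    have h (j : Fin 8) : x j * g s j = x j * x j + 2 * if j = i then 1 else 0 := by
      rcases hcases j with h | h | h <;> grind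
    have hnorm : ∑ j, x j * x j = 4 := hnorm
    simp [dotProduct, h, Finset.sum_add_distrib, hnorm]
  have hodd {s : ℤ} (hs : Odd s) (j : Fin 8) : Odd (g s j) := by
    rcases hcases j with h | h | h <;> grind
  have hsum_add (s : ℤ) : ∑ j, g s j = ∑ j, g 0 j + s := by
    have h (j : Fin 8) : g s j = g 0 j + if j = k then s else 0 := by grind
    simp [h, Finset.sum_add_distrib]
  obtain ⟨s, hs, hsum⟩ : ∃ s : ℤ, (s = 1 ∨ s = -1) ∧ 4 ∣ ∑ j, g s j := by
    have heven : Even (∑ j, (g 1 j - 1)) :=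
      Finset.even_sum _ fun j _ => (hodd odd_one j).sub_odd odd_one
    obtain ⟨m, hm⟩ := heven
    have h1 := hsum_add 1
    have h2 := hsum_add (-1)
    simp only [Finset.sum_sub_distrib, Finset.sum_const, Finset.card_fin] at hm
    rcases Int.even_or_odd' m with ⟨n, hn | hn⟩
    · exact ⟨1, Or.inl rfl, by lia⟩
    · exact ⟨-1, Or.inr rfl, by lia⟩
  have hs1 : s * s = 1 := by rcases hs with rfl | rfl <;> rfl
  have hs2 : Odd s := by rcases hs with rfl | rfl <;> decide
  exact ⟨g s, ⟨mem_doubledLattice_iff.2 ⟨Or.inr (hodd hs2), hsum⟩, hnormg hs1⟩, hodd hs2, hdot s⟩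

theorem orbit_eq_of_even {y : Fin 8 → ℤ} (hy : y ∈ frameCoords) (heven : ∀ i, Even (y i)) :
    MulAction.orbit WE8 ((1 / 4 : ℂ) • intVec y) = MulAction.orbit WE8 (stdVec 0) := by
  by_cases hfour : ∃ i, (y i).natAbs = 4
  · obtain ⟨i, hi⟩ := hfour
    exact isFrameFamily_stdVec.orbit_eq_of_mem_signedImage (mem_signedImage_stdVec hy hi) 0
  obtain ⟨x, hx⟩ : ∃ x : Fin 8 → ℤ, y = 2 • x := by
    choose x hx using heven
    exact ⟨x, funext fun i => by rw [hx, two_nsmul, Pi.add_apply]⟩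
  have hyx (j : Fin 8) : y j = 2 * x j := by rw [hx, Pi.smul_apply, nsmul_eq_mul]; rfl
  have hx1 (j : Fin 8) : (x j).natAbs ≤ 1 := by
    have := natAbs_le_four hy.2 j
    have := hyx j
    have := not_exists.1 hfour j
    lia
  have hnorm : x ⬝ᵥ x = 4 := by
    have h := hy.2
    rw [hx, smul_dotProduct, dotProduct_smul] at h
    lia
  obtain ⟨i, hi⟩ := exists_two_le_natAbs hy.2
  obtain ⟨k, hk⟩ := exists_natAbs_le_one hy.2
  obtain ⟨g, hg, hodd, hxg⟩ := exists_odd_mem_frameCoords hx1 hnorm (i := i) (k := k)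
    (by have := hyx i; lia) (by have := hyx k; lia)
  refine Eq.trans ?_ (orbit_eq_of_odd hg hodd)
  refine orbit_eq_of_ip_eq_three_quarters (mem_frameVectors_iff.2 ⟨y, hy, rfl⟩)
    (mem_frameVectors_iff.2 ⟨g, hg, rfl⟩) ?_
  rw [ip_smul_intVec, hx, smul_dotProduct, hxg]
  norm_num

theorem exists_mem_WE8_map_eq_stdVec {a : V8} (ha : a ∈ frameVectors) :
    ∃ w ∈ WE8, w a = stdVec 0 := by
  obtain ⟨y, hy, rfl⟩ := mem_frameVectors_iff.1 ha
  have horbit : MulAction.orbit WE8 ((1 / 4 : ℂ) • intVec y) = MulAction.orbit WE8 (stdVec 0) :=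
    (mem_doubledLattice_iff.1 hy.1).1.elim (orbit_eq_of_even hy) (orbit_eq_of_odd hy)
  obtain ⟨w, hw⟩ := MulAction.orbit_eq_iff.1 horbit.symm
  exact ⟨w, w.2, hw⟩

theorem isClFrame_frameOf {a : V8} (ha : a ∈ frameVectors) : IsClFrame 8 (frameOf a) := by
  obtain ⟨w, hw, hwa⟩ := exists_mem_WE8_map_eq_stdVec ha
  have hframe : IsClFrame 8 (w • frameOf a) := by
    rw [smul_frameOf hw, hwa, frameOf_stdVec]
    exact isClFrame_stdVec
  rw [← inv_smul_smul w (frameOf a)]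
  exact hframe.smul (inv_mem hw)

theorem IsClFrame.eq_frameOf {B : Set V8} (hB : IsClFrame 8 B) {v : V8} (hv : v ∈ B) :
    B = frameOf v := by
  have hF := isClFrame_frameOf (hB.subset_frameVectors hv)
  exact Set.eq_of_subset_of_ncard_le (hB.subset_frameOf hv) (hF.ncard_eq.trans hB.ncard_eq.symm).le
    (Set.finite_of_ncard_ne_zero (by rw [hF.ncard_eq]; decide))

theorem existsUnique_isClFrame_mem {v : V8} (hv : v ∈ frameVectors) :
    ∃! B, IsClFrame 8 B ∧ v ∈ B :=
  ⟨frameOf v, ⟨isClFrame_frameOf hv, hv, by rw [← two_smul ℂ]; exact hv.2⟩,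
    fun _ ⟨hB, hvB⟩ => hB.eq_frameOf hvB⟩

theorem IsClFrame.existsUnique_superset {l : ℕ} {A : Set V8} (hA : IsClFrame l A) (hl : 1 ≤ l) :
    ∃! B, IsClFrame 8 B ∧ A ⊆ B := by
  obtain ⟨v, hv⟩ := hA.nonempty hl
  exact ⟨frameOf v, ⟨isClFrame_frameOf (hA.subset_frameVectors hv), hA.subset_frameOf hv⟩,
    fun B ⟨hB, hsub⟩ => hB.eq_frameOf (hsub hv)⟩

theorem IsFrameFamily.exists_mem_WE8_map_eq {ι : Type*} [Finite ι] {a : ι → V8}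
    (ha : IsFrameFamily a) (σ : Equiv.Perm ι) : ∃ w ∈ WE8, ∀ i, w (a i) = a (σ i) := by
  classical
  induction σ using Equiv.Perm.swap_induction_on with
  | one => exact ⟨1, one_mem _, fun _ => rfl⟩
  | swap_mul σ x y hxy ih =>
    obtain ⟨w, hw, hwσ⟩ := ih
    have hroot : ip (a x - a y) (a x - a y) = 2 := by
      have hx := ha.ip_self x
      have hy := ha.ip_self y
      have hip := ha.ip_eq_zero hxy
      simp only [ip_eq_dotProduct, sub_dotProduct, dotProduct_sub,
        dotProduct_comm (a y) (a x)] at hx hy hip ⊢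
      linear_combination hx + hy - 2 * hip
    have hswap (i : ι) : rootReflection hroot (a i) = a (Equiv.swap x y i) := by
      have hcoeff : ip (a x - a y) (a i) = ip (a x) (a i) - ip (a y) (a i) := sub_dotProduct _ _ _
      rw [rootReflection_apply, hcoeff]
      rcases eq_or_ne i x with rfl | hix
      · rw [ha.ip_self, ha.ip_eq_zero hxy.symm, Equiv.swap_apply_left]; simp
      rcases eq_or_ne i y with rfl | hiy
      · rw [ha.ip_self, ha.ip_eq_zero hxy, Equiv.swap_apply_right]; simp
      · rw [ha.ip_eq_zero hix.symm, ha.ip_eq_zero hiy.symm, Equiv.swap_apply_of_ne_of_ne hix hiy]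
        simp
    exact ⟨_, mul_mem (rootReflection_mem_WE8 (ha.sub_mem x y) hroot) hw, fun i => by
      rw [LinearEquiv.mul_apply, hwσ, hswap, Equiv.Perm.mul_apply]⟩

theorem IsFrameFamily.exists_mem_WE8_smul_signedImage_eq {ι : Type*} [Finite ι] {a : ι → V8}
    (ha : IsFrameFamily a) {J K : Finset ι} (hcard : J.card = K.card) :
    ∃ w ∈ WE8, w • signedImage a J = signedImage a K := by
  obtain ⟨σ, hσ⟩ : ∃ σ : Equiv.Perm ι, J.map σ.toEmbedding = K := by
    classical
    obtain ⟨σ, hσ⟩ := Set.powersetCard.isPretransitive.exists_smul_eq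
      (⟨J, hcard⟩ : Set.powersetCard ι K.card) ⟨K, rfl⟩
    exact ⟨σ, (Finset.map_eq_image _ _).trans (congrArg Subtype.val hσ)⟩
  obtain ⟨w, hw, hwa⟩ := ha.exists_mem_WE8_map_eq σ
  refine ⟨w, hw, ?_⟩
  rw [smul_signedImage, ← hσ, ← signedImage_comp]
  exact congrArg (signedImage · J) (funext hwa)

theorem IsClFrame.exists_mem_WE8_smul_eq_signedImage {l : ℕ} {A : Set V8} (hA : IsClFrame l A)
    (hl : 1 ≤ l) : ∃ w ∈ WE8, ∃ J : Finset (Fin 8), J.card = l ∧ signedImage stdVec J = w • A := by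
  obtain ⟨v, hv⟩ := hA.nonempty hl
  obtain ⟨w, hw, hwv⟩ := exists_mem_WE8_map_eq_stdVec (hA.subset_frameVectors hv)
  have hsub : w • A ⊆ signedImage stdVec Finset.univ := by
    rw [← frameOf_stdVec 0, ← hwv, ← smul_frameOf hw]
    exact Set.smul_set_mono (hA.subset_frameOf hv)
  exact ⟨w, hw, (hA.smul hw).exists_eq_signedImage_of_subset isFrameFamily_stdVec hsub⟩

theorem IsClFrame.exists_mem_WE8_smul_eq {l : ℕ} {A B : Set V8} (hA : IsClFrame l A)
    (hB : IsClFrame l B) (hl : 1 ≤ l) : ∃ w ∈ WE8, w • A = B := by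
  obtain ⟨u, hu, J, hJ, huA⟩ := hA.exists_mem_WE8_smul_eq_signedImage hl
  obtain ⟨v, hv, K, hK, hvB⟩ := hB.exists_mem_WE8_smul_eq_signedImage hl
  obtain ⟨w, hw, hwJK⟩ :=
    isFrameFamily_stdVec.exists_mem_WE8_smul_signedImage_eq (hJ.trans hK.symm)
  refine ⟨v⁻¹ * w * u, mul_mem (mul_mem (inv_mem hv) hw) hu, ?_⟩
  rw [mul_smul, mul_smul, ← huA, hwJK, hvB, inv_smul_smul]

/-! ### Counting -/

section Words

variable {α R : Type*} [AddCommGroup R] [DecidableEq R]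

/-- The words of length `n` over the alphabet `E` with total norm `m` and total residue `r`, where
`N` and `χ` are the norm and the residue of a letter. -/
def words (E : Finset α) (N : α → ℕ) (χ : α → R) (n m : ℕ) (r : R) : Finset (Fin n → α) :=
  {y ∈ Fintype.piFinset fun _ => E | ∑ i, N (y i) = m ∧ ∑ i, χ (y i) = r}

/-- The number of such words, computed by recursion on the first letter. Words whose norm exceeds
`m` are pruned early, which keeps the evaluation in the kernel short. -/
def wordCount (E : Finset α) (N : α → ℕ) (χ : α → R) : ℕ → ℕ → R → ℕ
  | 0, m, r => if m = 0 ∧ r = 0 then 1 else 0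
  | n + 1, m, r => ∑ a ∈ E with N a ≤ m, wordCount E N χ n (m - N a) (r - χ a)

theorem mem_words {E : Finset α} {N : α → ℕ} {χ : α → R} {n m : ℕ} {r : R} {y : Fin n → α} :
    y ∈ words E N χ n m r ↔ (∀ i, y i ∈ E) ∧ ∑ i, N (y i) = m ∧ ∑ i, χ (y i) = r := by
  rw [words, Finset.mem_filter, Fintype.mem_piFinset]

theorem cons_mem_words_iff {E : Finset α} {N : α → ℕ} {χ : α → R} {n m : ℕ} {r : R} {a : α}
    {y : Fin n → α} : (Fin.cons a y : Fin (n + 1) → α) ∈ words E N χ (n + 1) m r ↔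
      (a ∈ E ∧ N a ≤ m) ∧ y ∈ words E N χ n (m - N a) (r - χ a) := by
  simp only [mem_words, Fin.forall_fin_succ, Fin.sum_univ_succ, Fin.cons_zero, Fin.cons_succ,
    eq_sub_iff_add_eq']
  constructor
  · rintro ⟨⟨ha, hy⟩, hN, hχ⟩
    exact ⟨⟨ha, by lia⟩, hy, by lia, hχ⟩
  · rintro ⟨⟨ha, hle⟩, hy, hN, hχ⟩
    exact ⟨⟨ha, hy⟩, by lia, hχ⟩

theorem card_words (E : Finset α) (N : α → ℕ) (χ : α → R) (n m : ℕ) (r : R) :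
    (words E N χ n m r).card = wordCount E N χ n m r := by
  induction n generalizing m r with
  | zero => simp [words, wordCount, Finset.filter_const, eq_comm, apply_ite]
  | succ n ih =>
    simp only [wordCount, ← ih, ← Finset.card_sigma]
    refine Finset.card_nbij' (fun y => ⟨y 0, Fin.tail y⟩) (fun p => Fin.cons p.1 p.2) ?_ ?_ ?_ ?_
    · intro y hy
      rw [Finset.mem_coe, ← Fin.cons_self_tail y, cons_mem_words_iff] at hy
      simpa using hy
    · rintro ⟨a, y⟩ h
      simpa [cons_mem_words_iff] using h
    · exact fun y _ => Fin.cons_self_tail y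
    · exact fun _ _ => rfl

end Words

/-- The `y ∈ ℤ⁸` with `⟨y,y⟩ = 16` and `4 ∣ ∑ yᵢ` whose coordinates all satisfy `P`, presented as
words so that `card_words` counts them. -/
def frameWords (P : ℤ → Prop) [DecidablePred P] : Finset (Fin 8 → ℤ) :=
  words {e ∈ Finset.Icc (-4) 4 | P e} (fun e => e.natAbs * e.natAbs) (Int.cast : ℤ → ZMod 4) 8 16 0

theorem mem_frameWords {P : ℤ → Prop} [DecidablePred P] {y : Fin 8 → ℤ} :
    y ∈ frameWords P ↔ (∀ i, P (y i)) ∧ 4 ∣ ∑ i, y i ∧ y ⬝ᵥ y = 16 := by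
  have hnorm : ∑ i, (y i).natAbs * (y i).natAbs = 16 ↔ y ⬝ᵥ y = 16 := by
    zify
    simp [dotProduct]
  have hsum : ∑ i, (y i : ZMod 4) = 0 ↔ 4 ∣ ∑ i, y i := by
    rw [← Int.cast_sum]
    exact ZMod.intCast_zmod_eq_zero_iff_dvd _ 4
  rw [frameWords, mem_words, hnorm, hsum]
  constructor
  · rintro ⟨hE, hnorm, hsum⟩
    exact ⟨fun i => (Finset.mem_filter.1 (hE i)).2, hsum, hnorm⟩
  · rintro ⟨hP, hsum, hnorm⟩
    refine ⟨fun i => Finset.mem_filter.2 ⟨Finset.mem_Icc.2 ?_, hP i⟩, hnorm, hsum⟩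
    have := natAbs_le_four hnorm i
    lia

theorem frameCoords_ncard : frameCoords.ncard = 2160 := by
  have hunion : frameCoords = (frameWords Even ∪ frameWords Odd : Finset (Fin 8 → ℤ)) := by
    ext y
    rw [Finset.mem_coe, Finset.mem_union, mem_frameWords, mem_frameWords, ← or_and_right,
      ← and_assoc, ← mem_doubledLattice_iff]
    rfl
  have hdisj : Disjoint (frameWords Even) (frameWords Odd) :=
    Finset.disjoint_left.2 fun y heven hodd =>
      Int.not_even_iff_odd.2 ((mem_frameWords.1 hodd).1 0) ((mem_frameWords.1 heven).1 0)
  have heven : (frameWords Even).card = 1136 := by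
    rw [frameWords, card_words]
    decide +kernel
  have hodd : (frameWords Odd).card = 1024 := by
    rw [frameWords, card_words]
    decide +kernel
  rw [hunion, Set.ncard_coe_finset, Finset.card_union_of_disjoint hdisj, heven, hodd]

theorem frameVectors_ncard : frameVectors.ncard = 2160 := by
  have himage : frameVectors = (fun y => (1 / 4 : ℂ) • intVec y) '' frameCoords :=
    Set.ext fun _ => mem_frameVectors_iff
  have hinj : Function.Injective fun y => (1 / 4 : ℂ) • intVec y :=
    (smul_right_injective V8 (by norm_num : (1 / 4 : ℂ) ≠ 0)).comp intVec_injective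
  rw [himage, Set.ncard_image_of_injective _ hinj, frameCoords_ncard]

theorem ncard_eq_ncard_mul_of_existsUnique {α β : Type*} (r : α → β → Prop) {s : Set α}
    {t : Set β} (hs : s.Finite) (ht : t.Finite) {k : ℕ} (hunique : ∀ a ∈ s, ∃! b, b ∈ t ∧ r a b)
    (hfiber : ∀ b ∈ t, {a | a ∈ s ∧ r a b}.ncard = k) : s.ncard = t.ncard * k := by
  classical
  lift s to Finset α using hs
  lift t to Finset β using ht
  rw [Set.ncard_coe_finset, Set.ncard_coe_finset, ← mul_one s.card]
  refine Finset.card_mul_eq_card_mul r (fun a ha => ?_) fun b hb => ?_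
  · obtain ⟨b, hb, hb'⟩ := hunique a ha
    exact Finset.card_eq_one.2 ⟨b, Finset.ext fun c => by
      rw [Finset.mem_bipartiteAbove, Finset.mem_singleton]
      exact ⟨hb' c, fun h => h ▸ hb⟩⟩
  · rw [← hfiber b hb, ← Set.ncard_coe_finset, Finset.coe_bipartiteBelow]
    rfl

theorem finite_frameVectors : frameVectors.Finite :=
  Set.finite_of_ncard_ne_zero (by rw [frameVectors_ncard]; decide)

theorem finite_setOf_isClFrame (l : ℕ) : {A | IsClFrame l A}.Finite :=
  finite_frameVectors.finite_subsets.subset fun _ hA => IsClFrame.subset_frameVectors hA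

theorem ncard_isClFrame_eight : {B | IsClFrame 8 B}.ncard = 135 := by
  have hfiber (B : Set V8) (hB : IsClFrame 8 B) : {v | v ∈ frameVectors ∧ v ∈ B}.ncard = 16 := by
    have hBv : {v | v ∈ frameVectors ∧ v ∈ B} = B := Set.inter_eq_right.2 hB.subset_frameVectors
    rw [hBv, hB.ncard_eq]
  have hcount := ncard_eq_ncard_mul_of_existsUnique (fun v (B : Set V8) => v ∈ B)
    finite_frameVectors (finite_setOf_isClFrame 8) (fun _ => existsUnique_isClFrame_mem) hfiber
  rw [frameVectors_ncard] at hcount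
  lia

theorem ncard_isClFrame {l : ℕ} (hl : 1 ≤ l) :
    {A | IsClFrame l A}.ncard = 135 * Nat.choose 8 l := by
  rw [← ncard_isClFrame_eight]
  exact ncard_eq_ncard_mul_of_existsUnique (fun A B : Set V8 => A ⊆ B) (finite_setOf_isClFrame l)
    (finite_setOf_isClFrame 8) (fun A hA => hA.existsUnique_superset hl)
    fun B hB => ncard_isClFrame_subset hB

/-- Proposition 1.3: for fixed `l ∈ {1,…,8}`, (1) `W(E₈)` maps `C_l`-frames to `C_l`-frames
and acts transitively on them; (2) each `C_l`-frame is contained in a unique `C₈`-frame;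
(3) there are exactly `135·C(8,l)` `C_l`-frames. -/
theorem statement1 (l : ℕ) (hl1 : 1 ≤ l) (hl8 : l ≤ 8) :
    (∀ w : V8 ≃ₗ[ℂ] V8, w ∈ WE8 → ∀ A : Set V8, IsClFrame l A → IsClFrame l (⇑w '' A)) ∧
    (∀ A B : Set V8, IsClFrame l A → IsClFrame l B →
      ∃ w : V8 ≃ₗ[ℂ] V8, w ∈ WE8 ∧ ⇑w '' A = B) ∧
    (∀ A : Set V8, IsClFrame l A → ∃! B : Set V8, IsClFrame 8 B ∧ A ⊆ B) ∧
    {A : Set V8 | IsClFrame l A}.ncard = 135 * Nat.choose 8 l :=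
  ⟨fun _ hw _ hA => hA.smul hw, fun _ _ hA hB => hA.exists_mem_WE8_smul_eq hB hl1,
    fun _ hA => hA.existsUnique_superset hl1, ncard_isClFrame hl1⟩
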